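/- Let H be the random-walk transition matrix of a finite bipartite graph with nonempty parts, at least one edge, and no isolated vertices, let 0 < ε < 1, and let G = εH + (1−ε)(1/N)·eeᵀ be the corresponding Google matrix. Then −ε is an eigenvalue of G. In particular, the subdominant eigenvalue of the PageRank matrix built on a bipartite graph has modulus exactly ε. -/

import Mathlib

open Matrix

/-- The random-walk transition matrix `H` of a bipartite graph with parts `U`, `V`
and edge relation `E`: `H i j = 1 / dᵢ` if `j` is adjacent to `i`, and `0` otherwise. -/
noncomputable def Hmat {U V : Type*} [Fintype U] [Fintype V]
    (E : U → V → Prop) [∀ u v, Decidable (E u v)] :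
    Matrix (U ⊕ V) (U ⊕ V) ℝ :=
  Matrix.of fun i j =>
    match i, j with
    | Sum.inl u, Sum.inr v =>
        if E u v then 1 / ((Finset.univ.filter fun v' => E u v').card : ℝ) else 0
    | Sum.inr v, Sum.inl u =>
        if E u v then 1 / ((Finset.univ.filter fun u' => E u' v).card : ℝ) else 0
    | _, _ => 0

/-- The block-wise teleportation matrix `M`: `M i j = 1 / xᵢ` if `j` lies in the same
part as `i` (where `xᵢ` is the size of the part containing `i`), and `0` otherwise. -/
noncomputable def Mmat (U V : Type*) [Fintype U] [Fintype V] :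
    Matrix (U ⊕ V) (U ⊕ V) ℝ :=
  Matrix.of fun i j =>
    match i, j with
    | Sum.inl _, Sum.inl _ => 1 / (Fintype.card U : ℝ)
    | Sum.inr _, Sum.inr _ => 1 / (Fintype.card V : ℝ)
    | _, _ => 0

/-- The BipartiteRank transition matrix `P = ε H + (1 - ε) M`. -/
noncomputable def Pmat {U V : Type*} [Fintype U] [Fintype V]
    (E : U → V → Prop) [∀ u v, Decidable (E u v)] (ε : ℝ) :
    Matrix (U ⊕ V) (U ⊕ V) ℝ :=
  ε • Hmat E + (1 - ε) • Mmat U V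


/-- The Google (PageRank) matrix `G = ε H + (1-ε) (1/N) e eᵀ` built on the bipartite
random-walk matrix `H`, where `N = |U| + |V|` is the number of vertices. -/
noncomputable def GoogleB {U V : Type*} [Fintype U] [Fintype V]
    (E : U → V → Prop) [∀ u v, Decidable (E u v)] (ε : ℝ) :
    Matrix (U ⊕ V) (U ⊕ V) ℝ :=
  ε • Hmat E + (1 - ε) • Matrix.of fun _ _ : U ⊕ V => (1 : ℝ) / (Fintype.card (U ⊕ V))

/-!
A left and a right eigenvector of a matrix for distinct eigenvalues are orthogonal.
Hence a rank-one perturbation `A + v uᵀ` along a right eigenvector `v` of `A` moves only the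
eigenvalue of `v`: every other left eigenvector annihilates `v uᵀ` (Brauer). For a Google matrix,
`A = εH` and `v = e`, so its eigenvalues other than `1` are eigenvalues of `εH`, and these have
modulus at most `|ε|` because the rows of `H` have absolute sum `1`.

If the graph is bipartite, conjugation by the sign matrix `diag(1, -1)` of the two parts maps `H` to
`-H`, so the spectrum of `εH` is symmetric about `0`. It contains `ε`, hence also `-ε`, and `-ε`
survives the perturbation because `-ε ≠ ε`.
-/

theorem dotProduct_eq_zero_of_vecMul_eq_smul_of_mulVec_eq_smul {R n : Type*} [CommRing R]
    [IsDomain R] [Fintype n] {A : Matrix n n R} {v w : n → R} {μ ν : R} (hw : w ᵥ* A = μ • w)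
    (hv : A *ᵥ v = ν • v) (hμν : μ ≠ ν) : w ⬝ᵥ v = 0 := by
  have h : μ * (w ⬝ᵥ v) = ν * (w ⬝ᵥ v) := by
    simpa only [hw, hv, smul_dotProduct, dotProduct_smul, smul_eq_mul] using
      (dotProduct_mulVec w A v).symm
  exact (mul_eq_mul_right_iff.mp h).resolve_left hμν

section Spectrum

variable {K n : Type*} [Field K] [Fintype n] [DecidableEq n]

theorem mem_spectrum_of_mulVec_eq_smul {A : Matrix n n K} {v : n → K} {μ : K} (hv : v ≠ 0)
    (h : A *ᵥ v = μ • v) : μ ∈ spectrum K A := by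
  rw [← spectrum_toLin', ← Module.End.hasEigenvalue_iff_mem_spectrum]
  exact Module.End.hasEigenvalue_of_hasEigenvector
    ⟨Module.End.mem_eigenspace_iff.mpr (by rwa [toLin'_apply]), hv⟩

theorem mem_spectrum_iff_exists_vecMul_eq_smul {A : Matrix n n K} {μ : K} :
    μ ∈ spectrum K A ↔ ∃ w ≠ 0, w ᵥ* A = μ • w := by
  rw [spectrum.mem_iff, isUnit_iff_isUnit_det, isUnit_iff_ne_zero, not_not,
    ← exists_vecMul_eq_zero_iff]
  simp only [vecMul_sub, Algebra.algebraMap_eq_smul_one, vecMul_smul, vecMul_one, sub_eq_zero,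
    eq_comm]

theorem mem_spectrum_add_vecMulVec {A : Matrix n n K} {v : n → K} {μ ν : K} (u : n → K)
    (hv : A *ᵥ v = ν • v) (hμ : μ ∈ spectrum K A) (hμν : μ ≠ ν) :
    μ ∈ spectrum K (A + vecMulVec v u) := by
  obtain ⟨w, hw0, hw⟩ := mem_spectrum_iff_exists_vecMul_eq_smul.mp hμ
  have horth : w ⬝ᵥ v = 0 := dotProduct_eq_zero_of_vecMul_eq_smul_of_mulVec_eq_smul hw hv hμν
  refine mem_spectrum_iff_exists_vecMul_eq_smul.mpr ⟨w, hw0, ?_⟩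
  rw [vecMul_add, vecMul_vecMulVec, horth, zero_smul, add_zero, hw]

theorem mem_spectrum_of_mem_spectrum_add_vecMulVec {A : Matrix n n K} {u v : n → K} {μ ν : K}
    (hv : A *ᵥ v = ν • v) (hμ : μ ∈ spectrum K (A + vecMulVec v u)) (hμν : μ ≠ ν + u ⬝ᵥ v) :
    μ ∈ spectrum K A := by
  have hv' : (A + vecMulVec v u) *ᵥ v = (ν + u ⬝ᵥ v) • v := by
    rw [add_mulVec, vecMulVec_mulVec, hv, op_smul_eq_smul, add_smul]
  simpa only [vecMulVec_neg, add_neg_cancel_right] using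
    mem_spectrum_add_vecMulVec (-u) hv' hμ hμν

end Spectrum

theorem norm_le_of_mem_spectrum_of_sum_norm_le {K n : Type*} [NormedField K] [Fintype n]
    [DecidableEq n] {A : Matrix n n K} {μ : K} {c : ℝ} (hA : ∀ i, ∑ j, ‖A i j‖ ≤ c)
    (hμ : μ ∈ spectrum K A) : ‖μ‖ ≤ c := by
  rw [← spectrum_toLin', ← Module.End.hasEigenvalue_iff_mem_spectrum] at hμ
  obtain ⟨k, hk⟩ := eigenvalue_mem_ball hμ
  rw [mem_closedBall_iff_norm] at hk
  calc ‖μ‖ ≤ ‖A k k‖ + ‖μ - A k k‖ := norm_le_norm_add_norm_sub' μ (A k k)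
    _ ≤ ‖A k k‖ + ∑ j ∈ Finset.univ.erase k, ‖A k j‖ := by gcongr
    _ = ∑ j, ‖A k j‖ := Finset.add_sum_erase _ (‖A k ·‖) (Finset.mem_univ k)
    _ ≤ c := hA k

theorem neg_mem_spectrum_of_toBlocks_eq_zero {R U V : Type*} [CommRing R] [Fintype U] [Fintype V]
    [DecidableEq U] [DecidableEq V] {A : Matrix (U ⊕ V) (U ⊕ V) R} (h₁₁ : A.toBlocks₁₁ = 0)
    (h₂₂ : A.toBlocks₂₂ = 0) {μ : R} (hμ : μ ∈ spectrum R A) : -μ ∈ spectrum R A := by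
  let S : Matrix (U ⊕ V) (U ⊕ V) R := fromBlocks 1 0 0 (-1)
  have hSS : S * S = 1 := by simp [S, fromBlocks_multiply]
  have hSAS : S * A * S = -A := by
    rw [← fromBlocks_toBlocks A, h₁₁, h₂₂]
    simp [S, fromBlocks_multiply, fromBlocks_neg]
  have hspec : spectrum R (-A) = spectrum R A := by
    rw [← hSAS]
    exact spectrum.units_conjugate (u := ⟨S, S, hSS, hSS⟩)
  rwa [← hspec, ← spectrum.neg_eq, Set.neg_mem_neg]

/-- The Google matrix `εP + (1 - ε) e uᵀ` of a transition matrix `P`, with damping factor `ε` and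
teleportation vector `u`. PageRank's uniform teleportation is `u = (1/N) e`. -/
def googleMatrix {R n : Type*} [Ring R] (P : Matrix n n R) (u : n → R) (ε : R) : Matrix n n R :=
  ε • P + (1 - ε) • vecMulVec 1 u

section GoogleMatrix

theorem map_googleMatrix {R S n : Type*} [Ring R] [Ring S] (f : R →+* S) (P : Matrix n n R)
    (u : n → R) (ε : R) :
    (googleMatrix P u ε).map f = googleMatrix (P.map f) (f ∘ u) (f ε) := by
  ext i j
  simp [googleMatrix]

theorem googleMatrix_eq_smul_add_vecMulVec {R n : Type*} [CommRing R] (P : Matrix n n R)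
    (u : n → R) (ε : R) : googleMatrix P u ε = ε • P + vecMulVec 1 ((1 - ε) • u) := by
  rw [googleMatrix, vecMulVec_smul]

variable {K n : Type*} [Fintype n] [DecidableEq n]

theorem mem_spectrum_googleMatrix [Field K] {P : Matrix n n K} {ε μ : K} (u : n → K)
    (hP : P *ᵥ 1 = 1) (hμ : μ ∈ spectrum K (ε • P)) (hμε : μ ≠ ε) :
    μ ∈ spectrum K (googleMatrix P u ε) := by
  rw [googleMatrix_eq_smul_add_vecMulVec]
  exact mem_spectrum_add_vecMulVec _ (by rw [smul_mulVec, hP]) hμ hμε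

theorem mem_spectrum_smul_of_mem_spectrum_googleMatrix [Field K] {P : Matrix n n K} {u : n → K}
    {ε μ : K} (hP : P *ᵥ 1 = 1) (hu : u ⬝ᵥ 1 = 1) (hμ : μ ∈ spectrum K (googleMatrix P u ε))
    (hμ1 : μ ≠ 1) : μ ∈ spectrum K (ε • P) := by
  rw [googleMatrix_eq_smul_add_vecMulVec] at hμ
  refine mem_spectrum_of_mem_spectrum_add_vecMulVec (ν := ε) (by rw [smul_mulVec, hP]) hμ ?_
  rwa [smul_dotProduct, hu, smul_eq_mul, mul_one, add_sub_cancel]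

theorem norm_le_norm_of_mem_spectrum_googleMatrix [NormedField K] {P : Matrix n n K} {u : n → K}
    {ε μ : K} (hP : P *ᵥ 1 = 1) (hP_norm : ∀ i, ∑ j, ‖P i j‖ ≤ 1) (hu : u ⬝ᵥ 1 = 1)
    (hμ : μ ∈ spectrum K (googleMatrix P u ε)) (hμ1 : μ ≠ 1) : ‖μ‖ ≤ ‖ε‖ := by
  refine norm_le_of_mem_spectrum_of_sum_norm_le (fun i => ?_)
    (mem_spectrum_smul_of_mem_spectrum_googleMatrix hP hu hμ hμ1)
  simp only [Matrix.smul_apply, smul_eq_mul, norm_mul, ← Finset.mul_sum]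
  exact mul_le_of_le_one_right (norm_nonneg ε) (hP_norm i)

theorem neg_mem_spectrum_googleMatrix {U V : Type*} [Field K] [CharZero K] [Fintype U] [Fintype V]
    [DecidableEq U] [DecidableEq V] [Nonempty (U ⊕ V)] {P : Matrix (U ⊕ V) (U ⊕ V) K} {ε : K}
    (u : U ⊕ V → K) (h₁₁ : P.toBlocks₁₁ = 0) (h₂₂ : P.toBlocks₂₂ = 0) (hP : P *ᵥ 1 = 1)
    (hε : ε ≠ 0) : -ε ∈ spectrum K (googleMatrix P u ε) := by
  have hmem : ε ∈ spectrum K (ε • P) :=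
    mem_spectrum_of_mulVec_eq_smul one_ne_zero (by rw [smul_mulVec, hP])
  have h₁₁' : (ε • P).toBlocks₁₁ = 0 := (congrArg (ε • ·) h₁₁).trans (smul_zero ε)
  have h₂₂' : (ε • P).toBlocks₂₂ = 0 := (congrArg (ε • ·) h₂₂).trans (smul_zero ε)
  exact mem_spectrum_googleMatrix u hP (neg_mem_spectrum_of_toBlocks_eq_zero h₁₁' h₂₂' hmem)
    (neg_ne_self.mpr hε)

end GoogleMatrix

theorem map_mulVec_one_eq_one {R S n : Type*} [NonAssocSemiring R] [NonAssocSemiring S] [Fintype n]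
    (f : R →+* S) {P : Matrix n n R} (hP : P *ᵥ 1 = 1) : P.map f *ᵥ 1 = 1 := by
  funext i
  simpa [mulVec, dotProduct] using congrArg f (congrFun hP i)

theorem sum_norm_map_ofReal_of_mem_rowStochastic {n : Type*} [Fintype n] [DecidableEq n]
    {P : Matrix n n ℝ} (hP : P ∈ rowStochastic ℝ n) (i : n) :
    ∑ j, ‖P.map Complex.ofReal i j‖ = 1 := by
  rw [← sum_row_of_mem_rowStochastic hP i]
  refine Finset.sum_congr rfl fun j _ => ?_
  rw [map_apply, Complex.norm_of_nonneg (nonneg_of_mem_rowStochastic hP)]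

theorem const_one_div_card_dotProduct_one (n K : Type*) [Fintype n] [Nonempty n] [DivisionRing K]
    [CharZero K] : (fun _ : n => 1 / (Fintype.card n : K)) ⬝ᵥ 1 = 1 := by
  have hcard : (Fintype.card n : K) ≠ 0 := Nat.cast_ne_zero.mpr Fintype.card_ne_zero
  rw [dotProduct_one, Finset.sum_const, Finset.card_univ, nsmul_eq_mul, mul_one_div_cancel hcard]

theorem sum_ite_one_div_card_filter_eq_one {α K : Type*} [Fintype α] [DivisionRing K] [CharZero K]
    {p : α → Prop} [DecidablePred p] (h : ∃ a, p a) :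
    ∑ a, (if p a then 1 / ((Finset.univ.filter p).card : K) else 0) = 1 := by
  obtain ⟨a, ha⟩ := h
  have hcard : ((Finset.univ.filter p).card : K) ≠ 0 :=
    Nat.cast_ne_zero.mpr (Finset.card_ne_zero_of_mem (a := a) (by simpa using ha))
  rw [← Finset.sum_filter, Finset.sum_const, nsmul_eq_mul, mul_one_div_cancel hcard]

section RandomWalk

variable {U V : Type*} [Fintype U] [Fintype V] (E : U → V → Prop) [∀ u v, Decidable (E u v)]

theorem Hmat_nonneg (i j : U ⊕ V) : 0 ≤ Hmat E i j := by
  rcases i with u | v <;> rcases j with u' | v' <;> simp only [Hmat, of_apply] <;> positivity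

theorem sum_Hmat (hU : ∀ u, ∃ v, E u v) (hV : ∀ v, ∃ u, E u v) (i : U ⊕ V) :
    ∑ j, Hmat E i j = 1 := by
  rcases i with u | v
  · simpa [Hmat] using sum_ite_one_div_card_filter_eq_one (K := ℝ) (hU u)
  · simpa [Hmat] using sum_ite_one_div_card_filter_eq_one (K := ℝ) (hV v)

theorem Hmat_mem_rowStochastic [DecidableEq U] [DecidableEq V] (hU : ∀ u, ∃ v, E u v)
    (hV : ∀ v, ∃ u, E u v) : Hmat E ∈ rowStochastic ℝ (U ⊕ V) :=
  mem_rowStochastic_iff_sum.mpr ⟨Hmat_nonneg E, sum_Hmat E hU hV⟩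

theorem GoogleB_eq_googleMatrix (ε : ℝ) :
    GoogleB E ε = googleMatrix (Hmat E) (fun _ => 1 / (Fintype.card (U ⊕ V) : ℝ)) ε := by
  ext i j
  simp [GoogleB, googleMatrix]

end RandomWalk

theorem googleB_neg_eps_eigenvalue_general {U V : Type*} [Fintype U] [Fintype V] [DecidableEq U]
    [DecidableEq V] {H : Matrix (U ⊕ V) (U ⊕ V) ℝ} (hH : H ∈ rowStochastic ℝ (U ⊕ V))
    (h₁₁ : H.toBlocks₁₁ = 0) (h₂₂ : H.toBlocks₂₂ = 0) {u : U ⊕ V → ℝ} (hu : u ⬝ᵥ 1 = 1) {ε : ℝ}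
    (hε0 : ε ≠ 0) (hε1 : ε ≠ -1) :
    -(ε : ℂ) ∈ spectrum ℂ ((googleMatrix H u ε).map Complex.ofReal) ∧
    IsGreatest
      {r : ℝ | ∃ lam ∈ spectrum ℂ ((googleMatrix H u ε).map Complex.ofReal),
        lam ≠ 1 ∧ ‖lam‖ = r} |ε| := by
  have hmap : (googleMatrix H u ε).map Complex.ofReal =
      googleMatrix (H.map Complex.ofReal) (Complex.ofReal ∘ u) ε :=
    map_googleMatrix Complex.ofRealHom H u ε
  have hH1 : H.map Complex.ofReal *ᵥ 1 = 1 := map_mulVec_one_eq_one Complex.ofRealHom hH.2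
  have huℂ : (Complex.ofReal ∘ u) ⬝ᵥ 1 = 1 := by
    simpa [dotProduct_one] using congrArg Complex.ofReal hu
  have : Nonempty (U ⊕ V) := not_isEmpty_iff.mp fun _ => by simp [dotProduct] at hu
  have h₁₁' : (H.map Complex.ofReal).toBlocks₁₁ = 0 :=
    (congrArg (·.map Complex.ofReal) h₁₁).trans (Matrix.map_zero _ Complex.ofReal_zero)
  have h₂₂' : (H.map Complex.ofReal).toBlocks₂₂ = 0 :=
    (congrArg (·.map Complex.ofReal) h₂₂).trans (Matrix.map_zero _ Complex.ofReal_zero)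
  rw [hmap]
  have hmem := neg_mem_spectrum_googleMatrix (Complex.ofReal ∘ u) h₁₁' h₂₂' hH1
    (Complex.ofReal_ne_zero.mpr hε0)
  refine ⟨hmem, ⟨-ε, hmem, ?_, by simp⟩, ?_⟩
  · rw [Ne, neg_eq_iff_eq_neg]
    exact_mod_cast hε1
  · rintro _ ⟨μ, hμ, hμ1, rfl⟩
    simpa using norm_le_norm_of_mem_spectrum_googleMatrix hH1
      (fun i => (sum_norm_map_ofReal_of_mem_rowStochastic hH i).le) huℂ hμ hμ1

/-- `-ε` is an eigenvalue of the Google matrix `G = ε H + (1-ε)(1/N) e eᵀ` of a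
bipartite graph; in particular, the subdominant eigenvalue of the PageRank matrix
built on a bipartite graph has modulus exactly `ε`. -/
theorem googleB_neg_eps_eigenvalue {U V : Type*} [Fintype U] [Fintype V]
    [DecidableEq U] [DecidableEq V] [Nonempty U] [Nonempty V]
    (E : U → V → Prop) [∀ u v, Decidable (E u v)]
    (hedge : ∃ u v, E u v)
    (hnoIsolU : ∀ u : U, ∃ v : V, E u v) (hnoIsolV : ∀ v : V, ∃ u : U, E u v)
    (ε : ℝ) (hε0 : 0 < ε) (hε1 : ε < 1) :
    (-(ε : ℂ)) ∈ spectrum ℂ ((GoogleB E ε).map Complex.ofReal) ∧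
    IsGreatest
      {r : ℝ | ∃ lam ∈ spectrum ℂ ((GoogleB E ε).map Complex.ofReal),
        lam ≠ 1 ∧ ‖lam‖ = r} ε := by
  simpa only [GoogleB_eq_googleMatrix, abs_of_pos hε0] using
    googleB_neg_eps_eigenvalue_general (Hmat_mem_rowStochastic E hnoIsolU hnoIsolV) rfl rfl
      (const_one_div_card_dotProduct_one (U ⊕ V) ℝ) hε0.ne' (by linarith)
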